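/- Let G and H be finite simple graphs such that the lexicographic product G*H has at least one edge. If γ_P(H) = 1, then Z(G*H) ≤ γ(G)·(Δ(G)|V(H)| + Δ(H)); if γ_P(H) ≥ 2 and G has no isolated vertices, then Z(G*H) ≤ γ_t(G)·(Δ(G)|V(H)| + Δ(H)). -/

import Mathlib

namespace PaperPD

open SimpleGraph

variable {V α β : Type*}

/-- Vertices that eventually become blue in the standard zero forcing process
starting from the blue set `B`. -/
inductive ZFClosure (G : SimpleGraph V) (B : Set V) : V → Prop
  | init (v : V) (hv : v ∈ B) : ZFClosure G B v
  | force (u w : V) (hu : ZFClosure G B u) (huw : G.Adj u w)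
      (h : ∀ x, G.Adj u x → x ≠ w → ZFClosure G B x) : ZFClosure G B w

/-- `B` is a zero forcing set of `G`. -/
def IsZeroForcingSet (G : SimpleGraph V) (B : Set V) : Prop :=
  ∀ v, ZFClosure G B v

/-- The zero forcing number `Z(G)`. -/
noncomputable def zeroForcingNumber (G : SimpleGraph V) [Fintype V] : ℕ :=
  sInf {k | ∃ B : Finset V, B.card = k ∧ IsZeroForcingSet G ↑B}

/-- Vertices that eventually become blue in the skew zero forcing process
starting from the blue set `B` (the forcing vertex need not be blue). -/
inductive SkewZFClosure (G : SimpleGraph V) (B : Set V) : V → Prop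
  | init (v : V) (hv : v ∈ B) : SkewZFClosure G B v
  | force (u w : V) (huw : G.Adj u w)
      (h : ∀ x, G.Adj u x → x ≠ w → SkewZFClosure G B x) : SkewZFClosure G B w

/-- `B` is a skew zero forcing set of `G`. -/
def IsSkewZeroForcingSet (G : SimpleGraph V) (B : Set V) : Prop :=
  ∀ v, SkewZFClosure G B v

/-- The skew zero forcing number `Z⁻(G)`. -/
noncomputable def skewZeroForcingNumber (G : SimpleGraph V) [Fintype V] : ℕ :=
  sInf {k | ∃ B : Finset V, B.card = k ∧ IsSkewZeroForcingSet G ↑B}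

/-- The closed neighborhood `N[S]` of a set of vertices. -/
def closedNbhd (G : SimpleGraph V) (S : Set V) : Set V :=
  S ∪ {v | ∃ u ∈ S, G.Adj u v}

/-- `S` is a power dominating set of `G`, i.e. `N[S]` is a zero forcing set. -/
def IsPowerDominatingSet (G : SimpleGraph V) (S : Set V) : Prop :=
  IsZeroForcingSet G (closedNbhd G S)

/-- The power domination number `γ_P(G)`. -/
noncomputable def powerDominationNumber (G : SimpleGraph V) [Fintype V] : ℕ :=
  sInf {k | ∃ S : Finset V, S.card = k ∧ IsPowerDominatingSet G ↑S}

/-- `S` is a dominating set of `G` (`N[S] = V`). -/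
def IsDominatingSet (G : SimpleGraph V) (S : Set V) : Prop :=
  ∀ v, v ∈ closedNbhd G S

/-- The domination number `γ(G)`. -/
noncomputable def dominationNumber (G : SimpleGraph V) [Fintype V] : ℕ :=
  sInf {k | ∃ S : Finset V, S.card = k ∧ IsDominatingSet G ↑S}

/-- `S` is a total dominating set of `G` (`N(S) = V`). -/
def IsTotalDominatingSet (G : SimpleGraph V) (S : Set V) : Prop :=
  ∀ v, ∃ u ∈ S, G.Adj u v

/-- The total domination number `γ_t(G)`. -/
noncomputable def totalDominationNumber (G : SimpleGraph V) [Fintype V] : ℕ :=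
  sInf {k | ∃ S : Finset V, S.card = k ∧ IsTotalDominatingSet G ↑S}

/-- The degree of a vertex. -/
noncomputable def deg (G : SimpleGraph V) (v : V) : ℕ :=
  (G.neighborSet v).ncard

/-- The maximum degree `Δ(G)`. -/
noncomputable def maxDeg (G : SimpleGraph V) [Fintype V] : ℕ :=
  Finset.univ.sup fun v => deg G v

/-- `A` is a symmetric real matrix whose off-diagonal nonzero pattern is
described by the graph `G`, i.e. `A ∈ S(G)`. -/
def MatrixOfGraph (G : SimpleGraph V) (A : Matrix V V ℝ) : Prop :=
  A.IsSymm ∧ ∀ i j, i ≠ j → (A i j ≠ 0 ↔ G.Adj i j)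

/-- The nullity of a square real matrix. -/
noncomputable def nullity [Fintype V] [DecidableEq V] (A : Matrix V V ℝ) : ℕ :=
  Fintype.card V - A.rank

/-- The maximum nullity `M(G)`. -/
noncomputable def maxNullity (G : SimpleGraph V) [Fintype V] [DecidableEq V] : ℕ :=
  sSup {k | ∃ A : Matrix V V ℝ, MatrixOfGraph G A ∧ nullity A = k}

/-- The tensor (direct) product of two simple graphs. -/
def tensorProd (G : SimpleGraph α) (H : SimpleGraph β) : SimpleGraph (α × β) where
  Adj p q := G.Adj p.1 q.1 ∧ H.Adj p.2 q.2
  symm := ⟨fun _ _ h => ⟨h.1.symm, h.2.symm⟩⟩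
  loopless := ⟨fun p h => G.loopless.irrefl p.1 h.1⟩

/-- The lexicographic product of two simple graphs. -/
def lexProd (G : SimpleGraph α) (H : SimpleGraph β) : SimpleGraph (α × β) where
  Adj p q := G.Adj p.1 q.1 ∨ (p.1 = q.1 ∧ H.Adj p.2 q.2)
  symm := ⟨fun _ _ h => h.elim (fun h' => Or.inl h'.symm) (fun h' => Or.inr ⟨h'.1.symm, h'.2.symm⟩)⟩
  loopless := ⟨fun p h => h.elim (fun h' => G.loopless.irrefl p.1 h') (fun h' => H.loopless.irrefl p.2 h'.2)⟩


theorem zf_trans {V : Type*} {K : SimpleGraph V} {A C : Set V}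
    (h : ∀ v ∈ A, ZFClosure K C v) {v : V} (hv : ZFClosure K A v) : ZFClosure K C v := by
  induction hv with
  | init v hv => exact h v hv
  | force u w _ huw _ ih1 ih2 => exact ZFClosure.force u w ih1 huw ih2

theorem local_set {V : Type*} [Fintype V] (K : SimpleGraph V) (D : ℕ) (hD : 1 ≤ D)
    (hdeg : ∀ v, deg K v ≤ D) (s : V) :
    ∃ B : Finset V, B.card ≤ D ∧ ∀ C : Set V, (↑B ⊆ C) →
      ∀ v, (v = s ∨ K.Adj s v) → ZFClosure K C v := by
  classical
  by_cases hs : ∃ w, K.Adj s w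
  · obtain ⟨w, hw⟩ := hs
    refine ⟨insert s ((K.neighborFinset s).erase w), ?_, ?_⟩
    · have h1 := hdeg s
      have h2 : deg K s = (K.neighborFinset s).card := by
        unfold deg
        exact Set.ncard_eq_toFinset_card' _
      have h3 : w ∈ K.neighborFinset s := by simpa using hw
      have h4 := Finset.card_erase_add_one h3
      have h5 := Finset.card_insert_le s ((K.neighborFinset s).erase w)
      omega
    · intro C hC
      have hsC : ZFClosure K C s := ZFClosure.init _ (hC (by simp))
      have hx : ∀ x, K.Adj s x → x ≠ w → ZFClosure K C x := fun x hx hxw =>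
        ZFClosure.init _ (hC (by simp [hx, hxw]))
      rintro v (rfl | hv)
      · exact hsC
      · by_cases hvw : v = w
        · subst hvw
          exact ZFClosure.force s v hsC hv hx
        · exact hx v hv hvw
  · refine ⟨{s}, by simpa using hD, ?_⟩
    intro C hC
    rintro v (rfl | hv)
    · exact ZFClosure.init _ (hC (by simp))
    · exact absurd ⟨v, hv⟩ hs

theorem zf_le {V : Type*} [Fintype V] (K : SimpleGraph V) (D : ℕ) (hD : 1 ≤ D)
    (hdeg : ∀ v, deg K v ≤ D) (S : Finset V) (hS : IsPowerDominatingSet K (↑S)) :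
    zeroForcingNumber K ≤ S.card * D := by
  classical
  choose B hB1 hB2 using local_set K D hD hdeg
  have h1 : zeroForcingNumber K ≤ (S.biUnion B).card := by
    apply Nat.sInf_le
    refine ⟨_, rfl, fun v => zf_trans ?_ (hS v)⟩
    have hsub : ∀ s ∈ S, (↑(B s) : Set V) ⊆ ↑(S.biUnion B) := fun s hs => by
      exact_mod_cast Finset.subset_biUnion_of_mem B hs
    rintro x (hx | ⟨u, hu, hux⟩)
    · exact hB2 x _ (hsub x hx) x (Or.inl rfl)
    · exact hB2 u _ (hsub u hu) x (Or.inr hux)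
  exact h1.trans (Finset.card_biUnion_le_card_mul _ _ _ fun s _ => hB1 s)

theorem deg_le_maxDeg {V : Type*} [Fintype V] (K : SimpleGraph V) (v : V) :
    deg K v ≤ maxDeg K :=
  Finset.le_sup (f := fun v => deg K v) (Finset.mem_univ v)

theorem deg_lex {α β : Type*} [Fintype α] [Fintype β]
    (G : SimpleGraph α) (H : SimpleGraph β) (p : α × β) :
    deg (lexProd G H) p ≤ maxDeg G * Fintype.card β + maxDeg H := by
  have h : (lexProd G H).neighborSet p =
      (G.neighborSet p.1) ×ˢ (Set.univ : Set β) ∪ ({p.1} : Set α) ×ˢ (H.neighborSet p.2) := by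
    ext ⟨a, b⟩
    simp [lexProd, eq_comm]
  unfold deg
  rw [h]
  refine (Set.ncard_union_le _ _).trans ?_
  rw [Set.ncard_prod, Set.ncard_prod, Set.ncard_univ, Set.ncard_singleton, one_mul,
    Nat.card_eq_fintype_card]
  exact Nat.add_le_add (Nat.mul_le_mul_right _ (deg_le_maxDeg G p.1)) (deg_le_maxDeg H p.2)

theorem lift_zf {α β : Type*} (G : SimpleGraph α) (H : SimpleGraph β) (C : Set (α × β))
    (A : Set β) (s : α) (h1 : ∀ x b, G.Adj s x → ZFClosure (lexProd G H) C (x, b))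
    (h2 : ∀ b ∈ A, ZFClosure (lexProd G H) C (s, b)) {b : β} (hb : ZFClosure H A b) :
    ZFClosure (lexProd G H) C (s, b) := by
  induction hb with
  | init v hv => exact h2 v hv
  | force u w _ huw _ ih1 ih2 =>
    refine ZFClosure.force (s, u) (s, w) ih1 (Or.inr ⟨rfl, huw⟩) ?_
    rintro ⟨x, c⟩ (hx | ⟨hx, hc⟩) hne
    · exact h1 x c hx
    · dsimp only at hx hc
      subst hx
      exact ih2 c hc (fun h => hne (by rw [h]))

/-- If `G*H` has an edge, then `Z(G*H) ≤ γ(G)(Δ(G)|V(H)| + Δ(H))`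
when `γ_P(H) = 1`, and `Z(G*H) ≤ γ_t(G)(Δ(G)|V(H)| + Δ(H))` when `γ_P(H) ≥ 2`
and `G` has no isolated vertices. -/
theorem stmt16 {α β : Type*} [Fintype α] [Fintype β]
    (G : SimpleGraph α) (H : SimpleGraph β)
    (hE : ∃ p q, (lexProd G H).Adj p q) :
    (powerDominationNumber H = 1 →
      zeroForcingNumber (lexProd G H) ≤
        dominationNumber G * (maxDeg G * Fintype.card β + maxDeg H)) ∧
    (2 ≤ powerDominationNumber H → (∀ v, ∃ u, G.Adj u v) →
      zeroForcingNumber (lexProd G H) ≤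
        totalDominationNumber G * (maxDeg G * Fintype.card β + maxDeg H)) := by
  classical
  obtain ⟨p, q, hpq⟩ := hE
  have hdeg := deg_lex G H
  have hD : 1 ≤ maxDeg G * Fintype.card β + maxDeg H := by
    refine le_trans ?_ (hdeg p)
    have : 0 < ((lexProd G H).neighborSet p).ncard :=
      (Set.ncard_pos (Set.toFinite _)).2 ⟨q, hpq⟩
    exact this
  have key := zf_le (lexProd G H) _ hD hdeg
  constructor
  · intro hP
    obtain ⟨T, hT1, hT2⟩ : powerDominationNumber H ∈
        {k | ∃ S : Finset β, S.card = k ∧ IsPowerDominatingSet H ↑S} :=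
      Nat.sInf_mem ⟨_, Finset.univ, rfl, fun v => ZFClosure.init _ (Or.inl (by simp))⟩
    rw [hP] at hT1
    obtain ⟨h, rfl⟩ := Finset.card_eq_one.1 hT1
    obtain ⟨S, hS1, hS2⟩ : dominationNumber G ∈
        {k | ∃ S : Finset α, S.card = k ∧ IsDominatingSet G ↑S} :=
      Nat.sInf_mem ⟨_, Finset.univ, rfl, fun v => Or.inl (by simp)⟩
    have := key (S ×ˢ {h}) ?_
    · simpa [hS1] using this
    have hadj : ∀ s ∈ S, ∀ x b, G.Adj s x → ZFClosure (lexProd G H)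
        (closedNbhd (lexProd G H) ↑(S ×ˢ {h})) (x, b) := fun s hs x b hx =>
      ZFClosure.init _ (Or.inr ⟨(s, h), by simpa using hs, Or.inl hx⟩)
    rintro ⟨v, b⟩
    rcases hS2 v with hv | ⟨u, hu, huv⟩
    · refine lift_zf G H _ _ v (hadj v hv) ?_ (hT2 b)
      rintro c (hc | ⟨d, hd, hdc⟩)
      · have : c = h := by simpa using hc
        subst this
        exact ZFClosure.init _ (Or.inl (by simpa using hv))
      · have : d = h := by simpa using hd
        subst this
        exact ZFClosure.init _ (Or.inr ⟨(v, d), by simpa using hv, Or.inr ⟨rfl, hdc⟩⟩)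
    · exact hadj u hu v b huv
  · intro _ hiso
    obtain ⟨S, hS1, hS2⟩ : totalDominationNumber G ∈
        {k | ∃ S : Finset α, S.card = k ∧ IsTotalDominatingSet G ↑S} :=
      Nat.sInf_mem ⟨_, Finset.univ, rfl, fun v => by simpa using hiso v⟩
    have := key (S ×ˢ {p.2}) ?_
    · simpa [hS1] using this
    rintro ⟨v, b⟩
    obtain ⟨u, hu, huv⟩ := hS2 v
    exact ZFClosure.init _ (Or.inr ⟨(u, p.2), by simpa using hu, Or.inl huv⟩)

end PaperPD
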